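/- arXiv:1801.08229 — 2 statements merged into one kernel-verified Lean document; each statement's English description precedes it below -/
import Mathlib

section
/- For all φ, ψ ∈ F one has I(φ, ψ) = J_ψ(φ) + J_φ(ψ), and the chain of inequalities n⁻¹·J_φ(ψ) ≤ J_ψ(φ) ≤ I(φ, ψ) ≤ (n+1)·J_ψ(φ). -/
open Finset

/-- Abstract Monge–Ampère pairing setup with `n = m + 1`: a symmetric multilinear
form `B` on `W^(n+1) = W^(m+2)`, a unit element `one`, and a nonempty convex set
`F ⊆ W`, satisfying (i) normalization `B(𝟙, φ₁, …, φₙ) = 1`, (ii) integration by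
parts `B(u, 𝟙, g₂, …, gₙ) = 0` for `u ∈ W₀` and `gᵢ ∈ W' = span (F ∪ {𝟙})`, and
(iii) the Cauchy–Schwarz / local Hodge index inequality
`B(u, u, φ₁, …, φ_{n-1}) ≤ 0` for `u ∈ W₀`. -/
structure MASetup (m : ℕ) (W : Type*) [AddCommGroup W] [Module ℝ W] where
  B : MultilinearMap ℝ (fun _ : Fin (m + 2) => W) ℝ
  symm : ∀ (v : Fin (m + 2) → W) (σ : Equiv.Perm (Fin (m + 2))), B (v ∘ σ) = B v
  one : W
  F : Set W
  Fne : F.Nonempty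
  Fconv : Convex ℝ F
  unital : ∀ g : Fin (m + 1) → W, (∀ i, g i ∈ F) → B (Fin.cons one g) = 1
  parts : ∀ u ∈ Submodule.span ℝ ({x | ∃ φ ∈ F, ∃ ψ ∈ F, x = φ - ψ} ∪ {one}),
      ∀ g : Fin m → W, (∀ i, g i ∈ Submodule.span ℝ (F ∪ {one})) →
        B (Fin.cons u (Fin.cons one g)) = 0
  hodge : ∀ u ∈ Submodule.span ℝ ({x | ∃ φ ∈ F, ∃ ψ ∈ F, x = φ - ψ} ∪ {one}),
      ∀ g : Fin m → W, (∀ i, g i ∈ F) → B (Fin.cons u (Fin.cons u g)) ≤ 0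

namespace MASetup

variable {m : ℕ} {W : Type*} [AddCommGroup W] [Module ℝ W]

/-- The vector with `j` copies of `φ` followed by copies of `ψ`. -/
def mixVec (φ ψ : W) (j : ℕ) {k : ℕ} : Fin k → W := fun i => if (i : ℕ) < j then φ else ψ

/-- The linear span `W₀` of the differences of elements of `F` together with `one`. -/
def W0 (S : MASetup m W) : Submodule ℝ W :=
  Submodule.span ℝ ({x | ∃ φ ∈ S.F, ∃ ψ ∈ S.F, x = φ - ψ} ∪ {S.one})

/-- The Monge–Ampère energy
`E(φ, ψ) = (n+1)⁻¹ ∑_{j=0}^{n} B(φ-ψ, φ, …, φ, ψ, …, ψ)` with `j` copies of `φ`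
and `n - j` copies of `ψ` among the last `n` arguments. -/
noncomputable def energy (S : MASetup m W) (φ ψ : W) : ℝ :=
  ((m : ℝ) + 2)⁻¹ * ∑ j ∈ Finset.range (m + 2), S.B (Fin.cons (φ - ψ) (mixVec φ ψ j))

/-- The functional `I(φ, ψ) = B(φ-ψ, ψ, …, ψ) - B(φ-ψ, φ, …, φ)`. -/
noncomputable def Ifun (S : MASetup m W) (φ ψ : W) : ℝ :=
  S.B (Fin.cons (φ - ψ) fun _ => ψ) - S.B (Fin.cons (φ - ψ) fun _ => φ)

/-- The functional `J_ψ(φ) = B(φ-ψ, ψ, …, ψ) - E(φ, ψ)`. -/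
noncomputable def Jfun (S : MASetup m W) (ψ φ : W) : ℝ :=
  S.B (Fin.cons (φ - ψ) fun _ => ψ) - S.energy φ ψ

end MASetup

/-!
The numbers `a j = B(φ - ψ, φ, …, φ, ψ, …, ψ)`, with `j` copies of `φ`, interpolate between the two
terms of `I(φ, ψ) = a 0 - a n`, and `E(φ, ψ)` is the mean of `a 0, …, a n`. Exchanging `φ` and `ψ`
reverses this sequence and changes its sign, so `J_ψ(φ) = a 0 - E` and `J_φ(ψ) = E - a n`. By
multilinearity `a (j + 1) - a j` is the value of `B` with `φ - ψ` in two slots, so the Hodge index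
inequality makes `a` decreasing, and all the inequalities compare the mean of a decreasing sequence
with its first and last terms.
-/

namespace MASetup

variable {α : Type*} (φ ψ : α)

theorem mixVec_zero (k : ℕ) : (mixVec φ ψ 0 : Fin k → α) = fun _ => ψ :=
  funext fun i => if_neg i.val.not_lt_zero

theorem mixVec_of_le {j k : ℕ} (h : k ≤ j) : (mixVec φ ψ j : Fin k → α) = fun _ => φ :=
  funext fun i => if_pos (i.isLt.trans_le h)

theorem mixVec_mem_pair (j : ℕ) {k : ℕ} (i : Fin k) : mixVec φ ψ j i ∈ ({φ, ψ} : Set α) := by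
  rw [mixVec]
  split_ifs <;> simp

theorem mixVec_succ_eq_cons (j k : ℕ) :
    (mixVec φ ψ (j + 1) : Fin (k + 1) → α) = Fin.cons φ (mixVec φ ψ j) := by
  funext i
  cases i using Fin.cases <;> simp [mixVec]

theorem mixVec_eq_snoc {j k : ℕ} (h : j ≤ k) :
    (mixVec φ ψ j : Fin (k + 1) → α) = Fin.snoc (mixVec φ ψ j : Fin k → α) ψ := by
  funext i
  cases i using Fin.lastCases <;> simp [mixVec, h]

theorem mixVec_comp_rev (j k : ℕ) :
    (mixVec φ ψ j : Fin k → α) ∘ Fin.rev = mixVec ψ φ (k - j) := by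
  funext i
  have h : (i.rev : ℕ) < j ↔ ¬(i : ℕ) < k - j := by
    rw [Fin.val_rev]
    lia
  simp only [Function.comp_apply, mixVec, h, ite_not]

end MASetup

open MASetup

/-- Symmetry of a function of several arguments, in the form of the field `MASetup.symm`. -/
def PermInvariant {ι α β : Type*} (f : (ι → α) → β) : Prop :=
  ∀ (v : ι → α) (σ : Equiv.Perm ι), f (v ∘ σ) = f v

theorem apply_cons_comp_perm {α β : Type*} {n : ℕ} {f : (Fin (n + 1) → α) → β}
    (hf : PermInvariant f) (u : α) (g : Fin n → α) (τ : Equiv.Perm (Fin n)) :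
    f (Fin.cons u (g ∘ τ)) = f (Fin.cons u g) := by
  rw [← hf (Fin.cons u g) (Equiv.Perm.decomposeFin.symm (0, τ))]
  congr 1
  funext i
  cases i using Fin.cases <;> simp

section MixedPairing

variable {R W N : Type*} [Ring R] [AddCommGroup W] [Module R W] [AddCommGroup N] [Module R N]

/-- The mixed Monge–Ampère pairing `f(φ - ψ, φ, …, φ, ψ, …, ψ)` with `j` copies of `φ` after the
first argument. For `j > n` all `n` remaining arguments are `φ`. -/
def mixedPairing {n : ℕ} (f : MultilinearMap R (fun _ : Fin (n + 1) => W) N) (φ ψ : W) (j : ℕ) :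
    N :=
  f (Fin.cons (φ - ψ) (mixVec φ ψ j))

theorem mixedPairing_zero {n : ℕ} (f : MultilinearMap R (fun _ : Fin (n + 1) => W) N) (φ ψ : W) :
    mixedPairing f φ ψ 0 = f (Fin.cons (φ - ψ) fun _ => ψ) := by
  rw [mixedPairing, mixVec_zero]

theorem mixedPairing_of_le {n : ℕ} (f : MultilinearMap R (fun _ : Fin (n + 1) => W) N) (φ ψ : W)
    {j : ℕ} (h : n ≤ j) : mixedPairing f φ ψ j = f (Fin.cons (φ - ψ) fun _ => φ) := by
  rw [mixedPairing, mixVec_of_le φ ψ h]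

theorem mixedPairing_swap {n : ℕ} {f : MultilinearMap R (fun _ : Fin (n + 1) => W) N}
    (hf : PermInvariant ⇑f) (φ ψ : W) (j : ℕ) :
    mixedPairing f ψ φ j = -mixedPairing f φ ψ (n - j) := by
  have hneg : f (Fin.cons (ψ - φ) (mixVec ψ φ j)) = -f (Fin.cons (φ - ψ) (mixVec ψ φ j)) := by
    simpa using f.cons_smul (mixVec ψ φ j) (-1) (φ - ψ)
  rw [mixedPairing, mixedPairing, hneg, ← mixVec_comp_rev ψ φ]
  exact congrArg Neg.neg (apply_cons_comp_perm hf _ _ Fin.revPerm).symm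

theorem mixedPairing_succ_sub {m : ℕ} {f : MultilinearMap R (fun _ : Fin (m + 2) => W) N}
    (hf : PermInvariant ⇑f) (φ ψ : W) {j : ℕ} (hj : j ≤ m) :
    mixedPairing f φ ψ (j + 1) - mixedPairing f φ ψ j =
      f (Fin.cons (φ - ψ) (Fin.cons (φ - ψ) (mixVec φ ψ j))) := by
  have hrotate : f (Fin.cons (φ - ψ) (mixVec φ ψ j)) =
      f (Fin.cons (φ - ψ) (Fin.cons ψ (mixVec φ ψ j))) := by
    rw [mixVec_eq_snoc φ ψ hj, Fin.snoc_eq_cons_rotate]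
    exact apply_cons_comp_perm hf _ _ (finRotate (m + 1))
  have hsub := f.map_update_sub (Fin.cons (φ - ψ) (Fin.cons 0 (mixVec φ ψ j))) (Fin.succ 0) φ ψ
  simp only [← Fin.cons_update, Fin.update_cons_zero] at hsub
  rw [mixedPairing, mixedPairing, hrotate, mixVec_succ_eq_cons, hsub]

theorem antitone_mixedPairing [PartialOrder N] [IsOrderedAddMonoid N] {m : ℕ}
    {f : MultilinearMap R (fun _ : Fin (m + 2) => W) N} (hf : PermInvariant ⇑f) {φ ψ : W}
    (hodge : ∀ g : Fin m → W, (∀ i, g i ∈ ({φ, ψ} : Set W)) →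
      f (Fin.cons (φ - ψ) (Fin.cons (φ - ψ) g)) ≤ 0) :
    Antitone (mixedPairing f φ ψ) := by
  refine antitone_nat_of_succ_le fun j => ?_
  rcases le_or_gt j m with hj | hj
  · rw [← sub_nonpos, mixedPairing_succ_sub hf φ ψ hj]
    exact hodge _ (mixVec_mem_pair φ ψ j)
  · rw [mixedPairing_of_le f φ ψ hj, mixedPairing_of_le f φ ψ (Nat.le_succ_of_le hj)]

end MixedPairing

section Functionals

variable {𝕜 W : Type*} [Field 𝕜] [AddCommGroup W] [Module 𝕜 W] {n : ℕ}

/-- The Monge–Ampère energy `E(φ, ψ)` of a form `f` in `n + 1` variables, the mean of the mixed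
pairings with `0, …, n` copies of `φ`. It is the notion `MASetup.energy` for an arbitrary form. -/
def mixedEnergy (f : MultilinearMap 𝕜 (fun _ : Fin (n + 1) => W) 𝕜) (φ ψ : W) : 𝕜 :=
  ((n : 𝕜) + 1)⁻¹ * ∑ j ∈ range (n + 1), mixedPairing f φ ψ j

/-- Aubin's functional `I(φ, ψ)` of an arbitrary form, as in `MASetup.Ifun`. -/
def aubinI (f : MultilinearMap 𝕜 (fun _ : Fin (n + 1) => W) 𝕜) (φ ψ : W) : 𝕜 :=
  f (Fin.cons (φ - ψ) fun _ => ψ) - f (Fin.cons (φ - ψ) fun _ => φ)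

/-- Aubin's functional `J_ψ(φ)` of an arbitrary form, as in `MASetup.Jfun`. The base point `ψ`
comes first. -/
def aubinJ (f : MultilinearMap 𝕜 (fun _ : Fin (n + 1) => W) 𝕜) (ψ φ : W) : 𝕜 :=
  f (Fin.cons (φ - ψ) fun _ => ψ) - mixedEnergy f φ ψ

variable {f : MultilinearMap 𝕜 (fun _ : Fin (n + 1) => W) 𝕜} {φ ψ : W}

theorem mixedEnergy_swap (hf : PermInvariant ⇑f) (φ ψ : W) :
    mixedEnergy f ψ φ = -mixedEnergy f φ ψ := by
  have hsum := sum_range_reflect (mixedPairing f φ ψ) (n + 1)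
  rw [add_tsub_cancel_right] at hsum
  simp only [mixedEnergy, mixedPairing_swap hf φ ψ, sum_neg_distrib, hsum, mul_neg]

theorem aubinI_eq_aubinJ_add_aubinJ (hf : PermInvariant ⇑f) (φ ψ : W) :
    aubinI f φ ψ = aubinJ f ψ φ + aubinJ f φ ψ := by
  have hswap := mixedPairing_swap hf φ ψ 0
  rw [mixedPairing_zero, mixedPairing_of_le f φ ψ (Nat.sub_zero n).ge] at hswap
  rw [aubinI, aubinJ, aubinJ, mixedEnergy_swap hf φ ψ, hswap]
  ring

theorem add_one_mul_mixedEnergy [CharZero 𝕜] (f : MultilinearMap 𝕜 (fun _ : Fin (n + 1) => W) 𝕜)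
    (φ ψ : W) :
    ((n : 𝕜) + 1) * mixedEnergy f φ ψ = ∑ j ∈ range (n + 1), mixedPairing f φ ψ j :=
  mul_inv_cancel_left₀ n.cast_add_one_ne_zero _

variable [LinearOrder 𝕜] [IsStrictOrderedRing 𝕜]

theorem aubinJ_le_aubinI (h : Antitone (mixedPairing f φ ψ)) : aubinJ f ψ φ ≤ aubinI f φ ψ := by
  have hsum : ((n : 𝕜) + 1) * mixedPairing f φ ψ n ≤ ((n : 𝕜) + 1) * mixedEnergy f φ ψ := by
    rw [add_one_mul_mixedEnergy]
    simpa using card_nsmul_le_sum (range (n + 1)) (mixedPairing f φ ψ) (mixedPairing f φ ψ n)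
      fun j hj => h (mem_range_succ_iff.1 hj)
  rw [aubinI, aubinJ, ← mixedPairing_of_le f φ ψ le_rfl]
  exact sub_le_sub_left (le_of_mul_le_mul_left hsum n.cast_add_one_pos) _

theorem aubinI_le_add_one_mul_aubinJ (h : Antitone (mixedPairing f φ ψ)) :
    aubinI f φ ψ ≤ ((n : 𝕜) + 1) * aubinJ f ψ φ := by
  have hsum : ((n : 𝕜) + 1) * mixedEnergy f φ ψ ≤
      n * mixedPairing f φ ψ 0 + mixedPairing f φ ψ n := by
    rw [add_one_mul_mixedEnergy, sum_range_succ]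
    gcongr
    simpa using sum_le_card_nsmul (range n) (mixedPairing f φ ψ) (mixedPairing f φ ψ 0)
      fun j _ => h j.zero_le
  rw [aubinI, aubinJ, ← mixedPairing_zero, ← mixedPairing_of_le f φ ψ le_rfl]
  linarith

theorem aubinJ_swap_le_mul_aubinJ (hf : PermInvariant ⇑f) (h : Antitone (mixedPairing f φ ψ)) :
    aubinJ f φ ψ ≤ n * aubinJ f ψ φ := by
  have hle := aubinI_le_add_one_mul_aubinJ h
  rw [aubinI_eq_aubinJ_add_aubinJ hf] at hle
  linarith

end Functionals

theorem Ifun_eq_Jfun_add_Jfun_general {𝕜 W : Type*} [Field 𝕜] [LinearOrder 𝕜]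
    [IsStrictOrderedRing 𝕜] [AddCommGroup W] [Module 𝕜 W] {m : ℕ}
    {f : MultilinearMap 𝕜 (fun _ : Fin (m + 2) => W) 𝕜} (hf : PermInvariant ⇑f) {φ ψ : W}
    (hodge : ∀ g : Fin m → W, (∀ i, g i ∈ ({φ, ψ} : Set W)) →
      f (Fin.cons (φ - ψ) (Fin.cons (φ - ψ) g)) ≤ 0) :
    aubinI f φ ψ = aubinJ f ψ φ + aubinJ f φ ψ ∧
      ((m : 𝕜) + 1)⁻¹ * aubinJ f φ ψ ≤ aubinJ f ψ φ ∧
      aubinJ f ψ φ ≤ aubinI f φ ψ ∧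
      aubinI f φ ψ ≤ ((m : 𝕜) + 2) * aubinJ f ψ φ := by
  have hanti := antitone_mixedPairing hf hodge
  refine ⟨aubinI_eq_aubinJ_add_aubinJ hf φ ψ, ?_, aubinJ_le_aubinI hanti, ?_⟩
  · rw [inv_mul_le_iff₀ m.cast_add_one_pos]
    exact_mod_cast aubinJ_swap_le_mul_aubinJ hf hanti
  · exact_mod_cast aubinI_le_add_one_mul_aubinJ hanti

namespace MASetup

variable {m : ℕ} {W : Type*} [AddCommGroup W] [Module ℝ W] (S : MASetup m W)

theorem Ifun_eq_aubinI (φ ψ : W) : S.Ifun φ ψ = aubinI S.B φ ψ := rfl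

theorem Jfun_eq_aubinJ (ψ φ : W) : S.Jfun ψ φ = aubinJ S.B ψ φ := by
  have hcast : ((m + 1 : ℕ) : ℝ) + 1 = m + 2 := by
    push_cast
    ring
  rw [Jfun, aubinJ, energy, mixedEnergy, hcast]
  rfl

theorem B_sub_sub_nonpos {φ ψ : W} (hφ : φ ∈ S.F) (hψ : ψ ∈ S.F) (g : Fin m → W)
    (hg : ∀ i, g i ∈ ({φ, ψ} : Set W)) :
    S.B (Fin.cons (φ - ψ) (Fin.cons (φ - ψ) g)) ≤ 0 :=
  S.hodge _ (Submodule.subset_span (.inl ⟨φ, hφ, ψ, hψ, rfl⟩)) g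
    fun i => Set.pair_subset hφ hψ (hg i)

end MASetup

/-- `I(φ, ψ) = J_ψ(φ) + J_φ(ψ)` and
`n⁻¹ J_φ(ψ) ≤ J_ψ(φ) ≤ I(φ, ψ) ≤ (n+1) J_ψ(φ)` with `n = m + 1`. -/
theorem Ifun_eq_Jfun_add_Jfun {m : ℕ} {W : Type*} [AddCommGroup W] [Module ℝ W]
    (S : MASetup m W) {φ ψ : W} (hφ : φ ∈ S.F) (hψ : ψ ∈ S.F) :
    S.Ifun φ ψ = S.Jfun ψ φ + S.Jfun φ ψ ∧
      ((m : ℝ) + 1)⁻¹ * S.Jfun φ ψ ≤ S.Jfun ψ φ ∧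
      S.Jfun ψ φ ≤ S.Ifun φ ψ ∧
      S.Ifun φ ψ ≤ ((m : ℝ) + 2) * S.Jfun ψ φ := by
  simpa only [S.Ifun_eq_aubinI, S.Jfun_eq_aubinJ] using
    Ifun_eq_Jfun_add_Jfun_general S.symm (S.B_sub_sub_nonpos hφ hψ)
end

section
/- There exists a constant C > 0 depending only on n such that, for every abstract Monge–Ampère pairing setup (W, B, 𝟙, F) as in the context, every choice of reference element φ_ref ∈ F, and all φ₁, φ₂, ψ₁, …, ψ_{n−1} ∈ F: −B(φ₁−φ₂, φ₁−φ₂, ψ₁, …, ψ_{n−1}) ≤ C · I(φ₁, φ₂)^{1/2^{n−1}} · (max{J(φ₁), J(φ₂), J(ψ₁), …, J(ψ_{n−1})})^{1 − 1/2^{n−1}}. -/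
/-!
For `g` with entries in `F`, the form `(u, v) ↦ -B(u, v, g)` is positive semidefinite on the span
of the differences of elements of `F`. If every entry of `g` is `x` or `y`, telescoping
`B(x - y, ·)` from `(y, …, y)` to `(x, …, x)` bounds `-B(x - y, x - y, g)` by `I(x, y)`. Replacing
one entry `gᵢ` by `y` changes it by two terms `-B(x - y, gᵢ - y, ·)`, in which `gᵢ` is replaced by
`x` and `y` respectively. If `K` bounds all `-B(z - y, z - y, ·)`, Cauchy–Schwarz then costs one
square root per entry: `-B(x - y, x - y, g) ≤ 9 I(x, y)^θ K^(1 - θ)` with `θ = 2^(-m)`.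

To bound `K` by `J`, take `y = φ_ref` and `F` finite, and let `X` be the largest of the numbers
`-B(x - φ_ref, x - φ_ref, g)`. Since `I(x, φ_ref) ≤ (m + 2) J(x)`, the same estimate with `K = X`
reads `X ≤ 9 ((m + 2) max J)^θ X^(1 - θ)`, which improves itself to `X ≤ 9^(2^m) (m + 2) max J`.
For any other base point `y`, the parallelogram inequality gives `K ≤ 4 X`.
-/

open Finset

section Symmetric

variable {R M N : Type*} [CommSemiring R] [AddCommMonoid M] [Module R M] [AddCommMonoid N]
  [Module R N]

/-- Symmetry of a multilinear map: invariance under every permutation of its arguments. -/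
def IsSymmMultilinear {ι : Type*} (f : MultilinearMap R (fun _ : ι => M) N) : Prop :=
  ∀ (v : ι → M) (σ : Equiv.Perm ι), f (v ∘ σ) = f v

namespace IsSymmMultilinear

variable {k : ℕ} {f : MultilinearMap R (fun _ : Fin (k + 1) => M) N}

theorem curryLeft (hf : IsSymmMultilinear f) (u : M) : IsSymmMultilinear (f.curryLeft u) := by
  intro v σ
  have extend_perm : (Fin.cons u (v ∘ σ) : Fin (k + 1) → M) =
      Fin.cons u v ∘ Equiv.Perm.decomposeFin.symm (0, σ) := by
    ext i
    cases i using Fin.cases <;> simp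
  simp only [MultilinearMap.curryLeft_apply, extend_perm, hf (Fin.cons u v)]

theorem map_update (hf : IsSymmMultilinear f) (v : Fin (k + 1) → M) (i : Fin (k + 1)) (a : M) :
    f (Function.update v i a) = f (Fin.cons a (i.removeNth v)) := by
  rw [← Fin.insertNth_removeNth, ← Fin.cons_comp_cycleRange, hf]

theorem map_cons_update_comm (hf : IsSymmMultilinear f) (a b : M) (v : Fin k → M) (i : Fin k) :
    f (Fin.cons a (Function.update v i b)) = f (Fin.cons b (Function.update v i a)) := by
  rw [← hf _ (Equiv.swap 0 i.succ), Equiv.comp_swap_eq_update]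
  simp only [Fin.cons_zero, Fin.cons_succ, Function.update_self, ← Fin.cons_update,
    Fin.update_cons_zero, Function.update_idem]

theorem map_cons_cons_comm {f : MultilinearMap R (fun _ : Fin (k + 2) => M) N}
    (hf : IsSymmMultilinear f) (a b : M) (v : Fin k → M) :
    f (Fin.cons a (Fin.cons b v)) = f (Fin.cons b (Fin.cons a v)) := by
  simpa only [Fin.update_cons_zero] using hf.map_cons_update_comm a b (Fin.cons 0 v) 0

end IsSymmMultilinear

end Symmetric

section RealPowers

open Real

theorem sqrt_rpow_mul_rpow_mul {a b θ : ℝ} (ha : 0 ≤ a) (hb : 0 ≤ b) (hθ : θ ≤ 1) :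
    √(a ^ θ * b ^ (1 - θ) * b) = a ^ (θ / 2) * b ^ (1 - θ / 2) := by
  rw [mul_assoc, ← rpow_add_one' hb (by linarith), sqrt_mul (by positivity), sqrt_eq_rpow,
    sqrt_eq_rpow, ← rpow_mul ha, ← rpow_mul hb]
  ring_nf

theorem le_rpow_inv_mul_of_le_mul_rpow_mul_rpow {a c x θ : ℝ} (ha : 0 ≤ a) (hc : 0 ≤ c)
    (hx : 0 ≤ x) (hθ : 0 < θ) (h : x ≤ c * (a ^ θ * x ^ (1 - θ))) : x ≤ c ^ θ⁻¹ * a := by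
  rcases hx.eq_or_lt with rfl | hx
  · positivity
  rw [← rpow_le_rpow_iff hx.le (by positivity) hθ, mul_rpow (by positivity) ha,
    rpow_inv_rpow hc hθ.ne']
  refine le_of_mul_le_mul_right ?_ (rpow_pos_of_pos hx (1 - θ))
  calc x ^ θ * x ^ (1 - θ) = x := by rw [← rpow_add hx, add_sub_cancel, rpow_one]
    _ ≤ c * a ^ θ * x ^ (1 - θ) := by rwa [mul_assoc]

end RealPowers

section Form

variable {m : ℕ} {W : Type*} [AddCommGroup W] [Module ℝ W]

/-- The bilinear form `(u, v) ↦ -B(u, v, g₁, …, gₘ)`, the abstract counterpart of the mixed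
Dirichlet form `∫ du ∧ dᶜv ∧ ddᶜg₁ ∧ ⋯ ∧ ddᶜgₘ`. -/
def dirichletForm (B : MultilinearMap ℝ (fun _ : Fin (m + 2) => W) ℝ) (g : Fin m → W) :
    LinearMap.BilinForm ℝ W :=
  LinearMap.mk₂ ℝ (fun u v => -B (Fin.cons u (Fin.cons v g)))
    (fun u u' v => by rw [B.cons_add, neg_add])
    (fun c u v => by rw [B.cons_smul, smul_neg])
    (fun u v v' => by
      simp only [← B.curryLeft_apply, (B.curryLeft u).cons_add, neg_add])
    (fun c u v => by
      simp only [← B.curryLeft_apply, (B.curryLeft u).cons_smul, smul_neg])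

/-- The energy `E(φ, ψ)` of `MASetup.energy`, for an arbitrary multilinear form. -/
noncomputable def formEnergy (B : MultilinearMap ℝ (fun _ : Fin (m + 2) => W) ℝ) (φ ψ : W) : ℝ :=
  ((m : ℝ) + 2)⁻¹ * ∑ j ∈ range (m + 2), B (Fin.cons (φ - ψ) (MASetup.mixVec φ ψ j))

/-- The functional `I(φ, ψ)` of `MASetup.Ifun`, for an arbitrary multilinear form. -/
def formI (B : MultilinearMap ℝ (fun _ : Fin (m + 2) => W) ℝ) (φ ψ : W) : ℝ :=
  B (Fin.cons (φ - ψ) fun _ => ψ) - B (Fin.cons (φ - ψ) fun _ => φ)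

/-- The functional `J_ψ(φ)` of `MASetup.Jfun`, for an arbitrary multilinear form. -/
noncomputable def formJ (B : MultilinearMap ℝ (fun _ : Fin (m + 2) => W) ℝ) (ψ φ : W) : ℝ :=
  B (Fin.cons (φ - ψ) fun _ => ψ) - formEnergy B φ ψ

/-- A symmetric multilinear form satisfying the Hodge index inequality
`B(u, u, g₁, …, gₘ) ≤ 0` for `gᵢ ∈ F` and `u` in the span of the differences of elements of `F`. -/
structure IsHodgeForm (B : MultilinearMap ℝ (fun _ : Fin (m + 2) => W) ℝ) (F : Set W) : Prop where
  symm : IsSymmMultilinear B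
  hodge : ∀ u ∈ vectorSpan ℝ F, ∀ g : Fin m → W, (∀ i, g i ∈ F) →
    B (Fin.cons u (Fin.cons u g)) ≤ 0

variable {B : MultilinearMap ℝ (fun _ : Fin (m + 2) => W) ℝ} {F : Set W}

theorem dirichletForm_apply (g : Fin m → W) (u v : W) :
    dirichletForm B g u v = -B (Fin.cons u (Fin.cons v g)) := rfl

theorem formJ_self (ψ : W) : formJ B ψ ψ = 0 := by
  have map_zero_cons : ∀ g : Fin (m + 1) → W, B (Fin.cons 0 g) = 0 :=
    fun g => B.map_coord_zero 0 rfl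
  simp only [formJ, formEnergy, sub_self, map_zero_cons, sum_const_zero, mul_zero]

theorem sub_mem_vectorSpan {x y : W} (hx : x ∈ F) (hy : y ∈ F) : x - y ∈ vectorSpan ℝ F :=
  vsub_mem_vectorSpan ℝ hx hy

namespace IsSymmMultilinear

theorem dirichletForm_isSymm (hB : IsSymmMultilinear B) (g : Fin m → W) :
    (dirichletForm B g).IsSymm :=
  ⟨fun u v => congrArg Neg.neg (hB.map_cons_cons_comm u v g)⟩

theorem dirichletForm_update_comm (hB : IsSymmMultilinear B) (g : Fin m → W) (i : Fin m)
    (u v w : W) :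
    dirichletForm B (Function.update g i w) u v = dirichletForm B (Function.update g i v) u w :=
  congrArg Neg.neg ((hB.curryLeft u).map_cons_update_comm v w g i)

theorem dirichletForm_sub_self_eq_update (hB : IsSymmMultilinear B) (x y : W)
    (g : Fin m → W) (i : Fin m) :
    dirichletForm B g (x - y) (x - y) =
      dirichletForm B (Function.update g i y) (x - y) (x - y) +
        (dirichletForm B (Function.update g i x) (x - y) (g i - y) -
          dirichletForm B (Function.update g i y) (x - y) (g i - y)) := by
  have swap := hB.dirichletForm_update_comm g i (x - y)
  calc dirichletForm B g (x - y) (x - y)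
      = dirichletForm B (Function.update g i (x - y)) (x - y) (g i) := by
        rw [swap, Function.update_eq_self]
    _ = dirichletForm B (Function.update g i (x - y)) (x - y) y +
          dirichletForm B (Function.update g i (x - y)) (x - y) (g i - y) := by
        rw [← map_add, add_sub_cancel]
    _ = dirichletForm B (Function.update g i y) (x - y) (x - y) +
          dirichletForm B (Function.update g i (g i - y)) (x - y) (x - y) := by
        rw [swap y, swap (g i - y)]
    _ = _ := by
        rw [map_sub (dirichletForm B (Function.update g i (g i - y)) (x - y)), swap x, swap y]

end IsSymmMultilinear

namespace IsHodgeForm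

theorem mono {T : Set W} (hB : IsHodgeForm B F) (hTF : T ⊆ F) : IsHodgeForm B T where
  symm := hB.symm
  hodge u hu g hg := hB.hodge u (vectorSpan_mono ℝ hTF hu) g fun i => hTF (hg i)

theorem dirichletForm_self_nonneg (hB : IsHodgeForm B F) {u : W} (hu : u ∈ vectorSpan ℝ F)
    {g : Fin m → W} (hg : ∀ i, g i ∈ F) : 0 ≤ dirichletForm B g u u :=
  neg_nonneg.2 (hB.hodge u hu g hg)

theorem abs_dirichletForm_le_sqrt (hB : IsHodgeForm B F) {u v : W} (hu : u ∈ vectorSpan ℝ F)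
    (hv : v ∈ vectorSpan ℝ F) {g : Fin m → W} (hg : ∀ i, g i ∈ F) :
    |dirichletForm B g u v| ≤ √(dirichletForm B g u u * dirichletForm B g v v) :=
  Real.abs_le_sqrt <|
    ((dirichletForm B g).restrict (vectorSpan ℝ F)).apply_sq_le_of_symm
      (fun w => hB.dirichletForm_self_nonneg w.2 hg)
      ⟨fun w w' => (hB.symm.dirichletForm_isSymm g).eq w w'⟩ ⟨u, hu⟩ ⟨v, hv⟩

theorem dirichletForm_sub_self_le (hB : IsHodgeForm B F) {u v : W} (hu : u ∈ vectorSpan ℝ F)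
    (hv : v ∈ vectorSpan ℝ F) {g : Fin m → W} (hg : ∀ i, g i ∈ F) :
    dirichletForm B g (u - v) (u - v) ≤
      2 * (dirichletForm B g u u + dirichletForm B g v v) := by
  have h := hB.dirichletForm_self_nonneg ((vectorSpan ℝ F).add_mem hu hv) hg
  simp only [map_add, map_sub, LinearMap.add_apply, LinearMap.sub_apply] at h ⊢
  linarith

theorem map_cons_update_le (hB : IsHodgeForm B F) {x y : W} (hx : x ∈ F) (hy : y ∈ F)
    {h : Fin (m + 1) → W} (hh : ∀ i, h i ∈ F) (i : Fin (m + 1)) :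
    B (Fin.cons (x - y) (Function.update h i x)) ≤
      B (Fin.cons (x - y) (Function.update h i y)) := by
  have difference_eq : B (Fin.cons (x - y) (Function.update h i x)) -
      B (Fin.cons (x - y) (Function.update h i y)) =
        B (Fin.cons (x - y) (Fin.cons (x - y) (i.removeNth h))) := by
    simp only [← B.curryLeft_apply, ← (hB.symm.curryLeft (x - y)).map_update,
      MultilinearMap.map_update_sub]
  have := hB.hodge (x - y) (sub_mem_vectorSpan hx hy) (i.removeNth h) fun j => hh _
  linarith

theorem antitone_map_cons_piecewise (hB : IsHodgeForm B F) {x y : W} (hx : x ∈ F) (hy : y ∈ F) :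
    Antitone fun s : Finset (Fin (m + 1)) =>
      B (Fin.cons (x - y) (s.piecewise (fun _ => x) fun _ => y)) := by
  refine Finset.antitone_iff_forall_insert_le.2 fun s i hi => ?_
  have piecewise_mem : ∀ j, s.piecewise (fun _ => x) (fun _ => y) j ∈ F :=
    fun j => s.piecewise_cases (fun _ => x) (fun _ => y) (· ∈ F) hx hy
  have update_eq : Function.update (s.piecewise (fun _ => x) fun _ => y) i y =
      s.piecewise (fun _ => x) fun _ => y :=
    Function.update_eq_iff.2
      ⟨(s.piecewise_eq_of_notMem (fun _ => x) (fun _ => y) hi).symm, fun _ _ => rfl⟩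
  simpa only [Finset.piecewise_insert, update_eq] using
    hB.map_cons_update_le hx hy piecewise_mem i

theorem map_cons_mem_Icc (hB : IsHodgeForm B F) {x y : W} (hx : x ∈ F) (hy : y ∈ F)
    {h : Fin (m + 1) → W} (hh : ∀ i, h i = x ∨ h i = y) :
    B (Fin.cons (x - y) h) ∈
      Set.Icc (B (Fin.cons (x - y) fun _ => x)) (B (Fin.cons (x - y) fun _ => y)) := by
  classical
  have h_eq : h = ({i | h i = x} : Finset _).piecewise (fun _ => x) fun _ => y := by
    ext i
    by_cases hi : h i = x
    · simp [hi]
    · rw [piecewise_eq_of_notMem _ _ _ (by simpa using hi)]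
      exact (hh i).resolve_left hi
  have anti := hB.antitone_map_cons_piecewise hx hy
  rw [h_eq]
  exact ⟨by simpa using anti (Finset.subset_univ _), by simpa using anti (Finset.empty_subset _)⟩

theorem dirichletForm_sub_self_le_formI (hB : IsHodgeForm B F) {x y : W} (hx : x ∈ F)
    (hy : y ∈ F) {g : Fin m → W} (hg : ∀ i, g i = x ∨ g i = y) :
    dirichletForm B g (x - y) (x - y) ≤ formI B x y := by
  have cons_x := hB.map_cons_mem_Icc hx hy (h := Fin.cons x g) (Fin.cases (.inl rfl) hg)
  have cons_y := hB.map_cons_mem_Icc hx hy (h := Fin.cons y g) (Fin.cases (.inr rfl) hg)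
  rw [map_sub, dirichletForm_apply, dirichletForm_apply, formI]
  linarith [cons_x.1, cons_y.2]

theorem formI_nonneg (hB : IsHodgeForm B F) {x y : W} (hx : x ∈ F) (hy : y ∈ F) :
    0 ≤ formI B x y :=
  sub_nonneg.2 (hB.map_cons_mem_Icc hx hy fun _ => .inl rfl).2

theorem formI_le_mul_formJ (hB : IsHodgeForm B F) {x y : W} (hx : x ∈ F) (hy : y ∈ F) :
    formI B x y ≤ (m + 2) * formJ B y x := by
  have mul_formJ_eq_sum : (m + 2) * formJ B y x = ∑ j ∈ range (m + 2),
      (B (Fin.cons (x - y) fun _ => y) - B (Fin.cons (x - y) (MASetup.mixVec x y j))) := by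
    rw [sum_sub_distrib, sum_const, card_range, nsmul_eq_mul, formJ, formEnergy]
    push_cast
    field_simp
  have term_nonneg : ∀ j ∈ range (m + 2),
      0 ≤ B (Fin.cons (x - y) fun _ => y) - B (Fin.cons (x - y) (MASetup.mixVec x y j)) :=
    fun j _ => sub_nonneg.2 (hB.map_cons_mem_Icc hx hy fun i => ite_eq_or_eq ((i : ℕ) < j) x y).2
  have mixVec_top : (MASetup.mixVec x y (m + 1) : Fin (m + 1) → W) = fun _ => x :=
    funext fun i => if_pos i.isLt
  rw [mul_formJ_eq_sum, formI, ← mixVec_top]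
  exact single_le_sum term_nonneg (self_mem_range_succ (m + 1))

theorem formJ_nonneg (hB : IsHodgeForm B F) {x y : W} (hx : x ∈ F) (hy : y ∈ F) :
    0 ≤ formJ B y x :=
  nonneg_of_mul_nonneg_right ((hB.formI_nonneg hx hy).trans (hB.formI_le_mul_formJ hx hy))
    (by positivity)

theorem dirichletForm_le_sqrt_of_update_le (hB : IsHodgeForm B F) {x y : W} (hx : x ∈ F)
    (hy : y ∈ F) {K : ℝ}
    (hK : ∀ z ∈ F, ∀ g : Fin m → W, (∀ i, g i ∈ F) → dirichletForm B g (z - y) (z - y) ≤ K)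
    {g : Fin m → W} (hg : ∀ i, g i ∈ F) (i : Fin m) {a : ℝ}
    (ha : ∀ z ∈ ({x, y} : Set W),
      dirichletForm B (Function.update g i z) (x - y) (x - y) ≤ a) :
    dirichletForm B g (x - y) (x - y) ≤ 3 * √(a * K) := by
  have abs_le : ∀ z ∈ ({x, y} : Set W), ∀ w ∈ F,
      |dirichletForm B (Function.update g i z) (x - y) (w - y)| ≤ √(a * K) := by
    intro z hz w hw
    have update_mem : ∀ j, Function.update g i z j ∈ F :=
      Function.forall_update_iff g (fun _ v => v ∈ F) |>.2
        ⟨Set.pair_subset hx hy hz, fun j _ => hg j⟩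
    have hu := sub_mem_vectorSpan hx hy
    have hw' := sub_mem_vectorSpan hw hy
    refine (hB.abs_dirichletForm_le_sqrt hu hw' update_mem).trans (Real.sqrt_le_sqrt ?_)
    exact mul_le_mul (ha z hz) (hK w hw _ update_mem)
      (hB.dirichletForm_self_nonneg hw' update_mem)
      ((hB.dirichletForm_self_nonneg hu update_mem).trans (ha z hz))
  rw [hB.symm.dirichletForm_sub_self_eq_update x y g i]
  linarith [le_of_abs_le (abs_le y (.inr rfl) x hx),
    le_of_abs_le (abs_le x (.inl rfl) (g i) (hg i)),
    neg_le_of_abs_le (abs_le y (.inr rfl) (g i) (hg i))]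

theorem dirichletForm_le_interpolation_of_eq_outside (hB : IsHodgeForm B F) {x y : W}
    (hx : x ∈ F) (hy : y ∈ F) {K : ℝ}
    (hK : ∀ z ∈ F, ∀ g : Fin m → W, (∀ i, g i ∈ F) → dirichletForm B g (z - y) (z - y) ≤ K)
    (s : Finset (Fin m)) {g : Fin m → W} (hg : ∀ i, g i ∈ F)
    (hgs : ∀ i ∉ s, g i = x ∨ g i = y) :
    dirichletForm B g (x - y) (x - y) ≤
      9 * (formI B x y ^ ((1 : ℝ) / 2 ^ #s) * K ^ (1 - (1 : ℝ) / 2 ^ #s)) := by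
  have hI := hB.formI_nonneg hx hy
  have hK₀ : 0 ≤ K :=
    (hB.dirichletForm_self_nonneg (sub_mem_vectorSpan hx hy) hg).trans (hK x hx g hg)
  induction s using Finset.induction_on generalizing g with
  | empty =>
    have := hB.dirichletForm_sub_self_le_formI hx hy fun i => hgs i (notMem_empty i)
    simp only [card_empty, pow_zero, div_one, Real.rpow_one, sub_self, Real.rpow_zero, mul_one]
    linarith
  | insert i s hi ih =>
    set A := formI B x y ^ ((1 : ℝ) / 2 ^ #s) * K ^ (1 - (1 : ℝ) / 2 ^ #s)
    have update_le : ∀ z ∈ ({x, y} : Set W),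
        dirichletForm B (Function.update g i z) (x - y) (x - y) ≤ 9 * A := by
      intro z hz
      refine ih (Function.forall_update_iff g (fun _ v => v ∈ F) |>.2
        ⟨Set.pair_subset hx hy hz, fun j _ => hg j⟩) fun j hj => ?_
      rcases eq_or_ne j i with rfl | hji
      · rwa [Function.update_self]
      · simpa only [Function.update_of_ne hji] using hgs j (by simp [hji, hj])
    calc dirichletForm B g (x - y) (x - y) ≤ 3 * √(9 * A * K) :=
          hB.dirichletForm_le_sqrt_of_update_le hx hy hK hg i update_le
      _ = 9 * √(A * K) := by
          rw [mul_assoc, Real.sqrt_mul (by norm_num), show √(9 : ℝ) = 3 by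
            rw [Real.sqrt_eq_iff_mul_self_eq_of_pos] <;> norm_num]
          ring
      _ = _ := by
          rw [sqrt_rpow_mul_rpow_mul hI hK₀ (div_le_one_of_le₀ (one_le_pow₀ one_le_two)
            (by positivity)), card_insert_of_notMem hi, pow_succ, div_div]

theorem dirichletForm_le_interpolation (hB : IsHodgeForm B F) {x y : W} (hx : x ∈ F)
    (hy : y ∈ F) {K : ℝ}
    (hK : ∀ z ∈ F, ∀ g : Fin m → W, (∀ i, g i ∈ F) → dirichletForm B g (z - y) (z - y) ≤ K)
    {g : Fin m → W} (hg : ∀ i, g i ∈ F) :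
    dirichletForm B g (x - y) (x - y) ≤
      9 * (formI B x y ^ ((1 : ℝ) / 2 ^ m) * K ^ (1 - (1 : ℝ) / 2 ^ m)) := by
  simpa only [card_univ, Fintype.card_fin] using
    hB.dirichletForm_le_interpolation_of_eq_outside hx hy hK univ hg
      fun i hi => absurd (mem_univ i) hi

theorem dirichletForm_sub_base_le (hB : IsHodgeForm B F) (hF : F.Finite) {y : W} (hy : y ∈ F)
    {M : ℝ} (hM : ∀ x ∈ F, formJ B y x ≤ M) {x : W} (hx : x ∈ F) {g : Fin m → W}
    (hg : ∀ i, g i ∈ F) :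
    dirichletForm B g (x - y) (x - y) ≤ 9 ^ (2 ^ m : ℝ) * ((m + 2) * M) := by
  obtain ⟨⟨x₀, g₀⟩, ⟨hx₀, hg₀⟩, hmax⟩ :=
    (F ×ˢ {g : Fin m → W | ∀ i, g i ∈ F}).exists_max_image
      (fun p => dirichletForm B p.2 (p.1 - y) (p.1 - y)) (hF.prod (Set.Finite.pi' fun _ => hF))
      ⟨(x, g), hx, hg⟩
  set X := dirichletForm B g₀ (x₀ - y) (x₀ - y)
  have le_max : ∀ z ∈ F, ∀ g : Fin m → W, (∀ i, g i ∈ F) →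
      dirichletForm B g (z - y) (z - y) ≤ X := fun z hz g hg => hmax (z, g) ⟨hz, hg⟩
  have hX : 0 ≤ X := hB.dirichletForm_self_nonneg (sub_mem_vectorSpan hx₀ hy) hg₀
  have hI : formI B x₀ y ≤ (m + 2) * M :=
    (hB.formI_le_mul_formJ hx₀ hy).trans (by gcongr; exact hM x₀ hx₀)
  have hI₀ := hB.formI_nonneg hx₀ hy
  have self_improving : X ≤ 9 * (((m + 2) * M) ^ ((1 : ℝ) / 2 ^ m) * X ^ (1 - (1 : ℝ) / 2 ^ m)) :=
    (hB.dirichletForm_le_interpolation hx₀ hy le_max hg₀).trans (by gcongr)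
  refine (le_max x hx g hg).trans ?_
  simpa only [one_div, inv_inv] using
    le_rpow_inv_mul_of_le_mul_rpow_mul_rpow (hI₀.trans hI) (by norm_num) hX (by positivity)
      self_improving

theorem dirichletForm_sub_self_le_of_formJ_le (hB : IsHodgeForm B F) (hF : F.Finite) {φref : W}
    (href : φref ∈ F) {M : ℝ} (hM : ∀ φ ∈ F, formJ B φref φ ≤ M) {x y : W} (hx : x ∈ F)
    (hy : y ∈ F) {g : Fin m → W} (hg : ∀ i, g i ∈ F) :
    dirichletForm B g (x - y) (x - y) ≤ 4 * 9 ^ (2 ^ m : ℝ) * (m + 2) * M := by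
  have hx' := hB.dirichletForm_sub_base_le hF href hM hx hg
  have hy' := hB.dirichletForm_sub_base_le hF href hM hy hg
  calc dirichletForm B g (x - y) (x - y)
      = dirichletForm B g ((x - φref) - (y - φref)) ((x - φref) - (y - φref)) := by
        rw [sub_sub_sub_cancel_right]
    _ ≤ 2 * (dirichletForm B g (x - φref) (x - φref) +
          dirichletForm B g (y - φref) (y - φref)) :=
        hB.dirichletForm_sub_self_le (sub_mem_vectorSpan hx href) (sub_mem_vectorSpan hy href) hg
    _ ≤ 4 * 9 ^ (2 ^ m : ℝ) * (m + 2) * M := by linarith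

end IsHodgeForm

theorem MASetup.isHodgeForm (S : MASetup m W) : IsHodgeForm S.B S.F where
  symm := S.symm
  hodge u hu := by
    refine S.hodge u (Submodule.span_mono ?_ hu)
    rintro _ ⟨φ, hφ, ψ, hψ, rfl⟩
    exact .inl ⟨φ, hφ, ψ, hψ, rfl⟩

end Form

theorem hodge_interpolation_J_general (m : ℕ) :
    ∃ C : ℝ, 0 < C ∧
      ∀ (W : Type*) [AddCommGroup W] [Module ℝ W]
        (B : MultilinearMap ℝ (fun _ : Fin (m + 2) => W) ℝ) (F : Set W), IsHodgeForm B F →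
        ∀ φref ∈ F, ∀ φ₁ ∈ F, ∀ φ₂ ∈ F, ∀ ψs : Fin m → W, (∀ i, ψs i ∈ F) →
          -B (Fin.cons (φ₁ - φ₂) (Fin.cons (φ₁ - φ₂) ψs)) ≤
            C * formI B φ₁ φ₂ ^ ((1 : ℝ) / 2 ^ m) *
              (univ.sup' univ_nonempty
                  (Fin.cons (formJ B φref φ₁)
                    (Fin.cons (formJ B φref φ₂) fun i => formJ B φref (ψs i)) :
                    Fin (m + 2) → ℝ)) ^ (1 - (1 : ℝ) / 2 ^ m) := by
  set K : ℝ := 4 * 9 ^ (2 ^ m : ℝ) * (m + 2)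
  refine ⟨9 * K ^ (1 - (1 : ℝ) / 2 ^ m), by positivity, ?_⟩
  intro W _ _ B F hB φref href φ₁ h₁ φ₂ h₂ ψs hψ
  set J : Fin (m + 2) → ℝ :=
    Fin.cons (formJ B φref φ₁) (Fin.cons (formJ B φref φ₂) fun i => formJ B φref (ψs i))
  set M := univ.sup' univ_nonempty J
  have hJ : ∀ i, J i ≤ M := fun i => le_sup' J (mem_univ i)
  have hM₀ : 0 ≤ M := (hB.formJ_nonneg h₁ href).trans (hJ 0)
  let T : Set W := insert φref (insert φ₁ (insert φ₂ (Set.range ψs)))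
  have hTF : T ⊆ F := by
    simpa only [T, Set.insert_subset_iff, Set.range_subset_iff] using ⟨href, h₁, h₂, hψ⟩
  have hTM : ∀ φ ∈ T, formJ B φref φ ≤ M := by
    simpa only [T, Set.forall_mem_insert, Set.forall_mem_range, formJ_self] using
      ⟨hM₀, hJ 0, hJ 1, fun i => hJ i.succ.succ⟩
  have href' : φref ∈ T := by simp [T]
  have h₁' : φ₁ ∈ T := by simp [T]
  have h₂' : φ₂ ∈ T := by simp [T]
  have hψ' : ∀ i, ψs i ∈ T := by simp [T]
  have hBT := hB.mono hTF
  calc dirichletForm B ψs (φ₁ - φ₂) (φ₁ - φ₂)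
      ≤ 9 * (formI B φ₁ φ₂ ^ ((1 : ℝ) / 2 ^ m) * (K * M) ^ (1 - (1 : ℝ) / 2 ^ m)) :=
        hBT.dirichletForm_le_interpolation h₁' h₂' (fun z hz g hg =>
          hBT.dirichletForm_sub_self_le_of_formJ_le T.toFinite href' hTM hz h₂' hg) hψ'
    _ = _ := by rw [Real.mul_rpow (by positivity) hM₀]; ring

/-- there is `C > 0` depending only on `n = m + 1` such that for
every setup, reference `φ_ref ∈ F`, and all `φ₁, φ₂, ψ₁, …, ψ_{n-1} ∈ F`:
`-B(φ₁-φ₂, φ₁-φ₂, ψ₁, …, ψ_{n-1}) ≤ C I(φ₁,φ₂)^{1/2^{n-1}}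
  (max{J(φ₁), J(φ₂), J(ψ₁), …, J(ψ_{n-1})})^{1-1/2^{n-1}}`. -/
theorem hodge_interpolation_J (m : ℕ) :
    ∃ C : ℝ, 0 < C ∧
      ∀ (W : Type*) [AddCommGroup W] [Module ℝ W] (S : MASetup m W),
        ∀ φref ∈ S.F, ∀ φ₁ ∈ S.F, ∀ φ₂ ∈ S.F,
          ∀ ψs : Fin m → W, (∀ i, ψs i ∈ S.F) →
            -S.B (Fin.cons (φ₁ - φ₂) (Fin.cons (φ₁ - φ₂) ψs)) ≤
              C * S.Ifun φ₁ φ₂ ^ ((1 : ℝ) / 2 ^ m) *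
                (Finset.univ.sup' Finset.univ_nonempty
                    (Fin.cons (S.Jfun φref φ₁)
                      (Fin.cons (S.Jfun φref φ₂) fun i => S.Jfun φref (ψs i)) :
                      Fin (m + 2) → ℝ)) ^ (1 - (1 : ℝ) / 2 ^ m) := by
  obtain ⟨C, hC, h⟩ := hodge_interpolation_J_general m
  exact ⟨C, hC, fun W _ _ S => h W S.B S.F S.isHodgeForm⟩
end
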